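/- arXiv:2508.06313 — 2 statements merged into one kernel-verified Lean document; each statement's English description precedes it below -/
import Mathlib

section
/- Let n ≥ 1, let 𝓛 be a fixed real symmetric positive definite n×n matrix, and let 𝓛̂ : ℝ → (n×n real matrices) be a differentiable matrix-valued function such that 𝓛̂(t) is symmetric positive definite for every t. Then the function t ↦ D_F(𝓛 ‖ 𝓛̂(t)) = log(det 𝓛̂(t) / det 𝓛) + tr(𝓛̂(t)⁻¹ 𝓛) − n is differentiable with derivative d/dt D_F(𝓛 ‖ 𝓛̂(t)) = tr( 𝓛̂(t)⁻¹ · 𝓛̂'(t) · 𝓛̂(t)⁻¹ · (𝓛̂(t) − 𝓛) ). -/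
/-!
Two classical formulas drive the computation. Jacobi's formula comes from multilinearity of the
determinant in the rows: the derivative is the sum of the determinants with one row of `M`
replaced by the same row of `M'`, which is `tr (adj M * M')`, so that
`(log det M)' = tr (M⁻¹ * M')`. Inversion has derivative `X ↦ -M⁻¹ * X * M⁻¹`. The two
contributions combine through `M⁻¹ * M' = M⁻¹ * M' * M⁻¹ * M`.
-/

section Matrix

variable {𝕜 n : Type*} [NontriviallyNormedField 𝕜]

theorem hasDerivAt_matrix {m E : Type*} [Finite m] [Finite n] [NormedAddCommGroup E]
    [NormedSpace 𝕜 E] {M : 𝕜 → Matrix m n E} {M' : Matrix m n E} {t : 𝕜} :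
    HasDerivAt M M' t ↔ ∀ i j, HasDerivAt (fun s => M s i j) (M' i j) t := by
  cases nonempty_fintype m
  cases nonempty_fintype n
  exact (hasDerivAt_pi (φ := M)).trans <| forall_congr' fun _ => hasDerivAt_pi

variable [Fintype n]

theorem hasDerivAt_matrix_trace {E : Type*} [NormedAddCommGroup E] [NormedSpace 𝕜 E]
    {M : 𝕜 → Matrix n n E} {M' : Matrix n n E} {t : 𝕜} (hM : HasDerivAt M M' t) :
    HasDerivAt (fun s => (M s).trace) M'.trace t :=
  HasDerivAt.fun_sum fun i _ => hasDerivAt_matrix.mp hM i i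

variable [DecidableEq n]

theorem sum_det_updateRow_eq_trace_adjugate_mul {R : Type*} [CommRing R] (A B : Matrix n n R) :
    ∑ i, (A.updateRow i (B i)).det = (A.adjugate * B).trace := by
  rw [Matrix.trace_mul_comm]
  refine Finset.sum_congr rfl fun i _ => ?_
  rw [Matrix.diag_apply, Matrix.mul_apply_eq_vecMul, ← Matrix.cramer_transpose_apply,
    Matrix.cramer_eq_adjugate_mulVec, ← Matrix.adjugate_transpose, Matrix.mulVec_transpose]

variable {𝔸 : Type*} [NormedCommRing 𝔸] [NormedAlgebra 𝕜 𝔸]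
  {M : 𝕜 → Matrix n n 𝔸} {M' : Matrix n n 𝔸} {t : 𝕜}

theorem hasDerivAt_matrix_det (hM : HasDerivAt M M' t) :
    HasDerivAt (fun s => (M s).det) ((M t).adjugate * M').trace t := by
  let detRows : ContinuousMultilinearMap 𝕜 (fun _ : n => n → 𝔸) 𝔸 :=
    { Matrix.detRowAlternating.toMultilinearMap.restrictScalars 𝕜 with
      cont := Continuous.matrix_det continuous_id }
  have hdet := (detRows.hasFDerivAt (x := M t)).comp_hasDerivAt t hM
  refine hdet.congr_deriv ?_
  rw [← sum_det_updateRow_eq_trace_adjugate_mul]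
  exact detRows.linearDeriv_apply _ _

theorem hasDerivAt_matrix_inv [CompleteSpace 𝔸] (hM : HasDerivAt M M' t) (ht : IsUnit (M t)) :
    HasDerivAt (fun s => (M s)⁻¹) (-((M t)⁻¹ * M' * (M t)⁻¹)) t := by
  open scoped Matrix.Norms.Operator in
  -- The operator norm makes matrices a Banach algebra. Its uniformity agrees with the entrywise one
  -- only after unfolding, so instance search does not find completeness.
  have : @CompleteSpace (Matrix n n 𝔸) PseudoMetricSpace.toUniformSpace :=
    inferInstanceAs (CompleteSpace (n → n → 𝔸))
  obtain ⟨u, hu⟩ := ht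
  have hinv : HasFDerivAt Ring.inverse _ (M t) := hu ▸ hasFDerivAt_ringInverse (𝕜 := 𝕜) u
  simp only [Matrix.nonsing_inv_eq_ringInverse]
  exact (hinv.comp_hasDerivAt t hM).congr_deriv (by simp [← hu])

theorem hasDerivAt_trace_matrix_inv_mul_const [CompleteSpace 𝔸] (hM : HasDerivAt M M' t)
    (ht : IsUnit (M t)) (A : Matrix n n 𝔸) :
    HasDerivAt (fun s => ((M s)⁻¹ * A).trace) (-((M t)⁻¹ * M' * (M t)⁻¹ * A).trace) t := by
  open scoped Matrix.Norms.Operator in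
  have hmul := (hasDerivAt_matrix_inv hM ht).mul_const A
  simpa using hasDerivAt_matrix_trace hmul

end Matrix

section LogDet

variable {n : Type*} [Fintype n] [DecidableEq n] {M : ℝ → Matrix n n ℝ} {M' : Matrix n n ℝ} {t : ℝ}

theorem hasDerivAt_log_matrix_det_div_const (hM : HasDerivAt M M' t) (ht : (M t).det ≠ 0)
    {c : ℝ} (hc : c ≠ 0) :
    HasDerivAt (fun s => Real.log ((M s).det / c)) ((M t)⁻¹ * M').trace t := by
  refine (((hasDerivAt_matrix_det hM).div_const c).log (div_ne_zero ht hc)).congr_deriv ?_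
  rw [div_div_div_cancel_right₀ hc, Matrix.inv_def, Ring.inverse_eq_inv', Matrix.smul_mul,
    Matrix.trace_smul, smul_eq_mul, inv_mul_eq_div]

/-- The log-determinant Bregman divergence `D_F(A ‖ B)` of the true matrix `A` from its estimate
`B`. It is meaningful when `det B / det A` is positive, in particular for positive definite `A` and
`B`; outside this range the logarithm takes a junk value. -/
noncomputable def logDetBregmanDiv (A B : Matrix n n ℝ) : ℝ :=
  Real.log (B.det / A.det) + (B⁻¹ * A).trace - Fintype.card n

theorem bregman_logdet_hasDerivAt_general (A : Matrix n n ℝ) (hM : HasDerivAt M M' t)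
    (hdet : 0 < (M t).det / A.det) :
    HasDerivAt (fun s => logDetBregmanDiv A (M s))
      ((M t)⁻¹ * M' * (M t)⁻¹ * (M t - A)).trace t := by
  obtain ⟨hMt, hA⟩ := div_ne_zero_iff.mp hdet.ne'
  have hlog := hasDerivAt_log_matrix_det_div_const hM hMt hA
  have htrace := hasDerivAt_trace_matrix_inv_mul_const hM
    ((Matrix.isUnit_iff_isUnit_det _).mpr hMt.isUnit) A
  refine ((hlog.add htrace).sub_const _).congr_deriv ?_
  rw [Matrix.mul_sub, Matrix.trace_sub, Matrix.nonsing_inv_mul_cancel_right _ _ hMt.isUnit,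
    sub_eq_add_neg]

end LogDet

/-- Let `𝓛` be a fixed real symmetric positive definite `n × n` matrix
(`n ≥ 1`) and let `𝓛̂ : ℝ → Matrix` be differentiable (entrywise, with entrywise derivative
`𝓛̂'`), with `𝓛̂ t` symmetric positive definite for every `t`.  Then
`t ↦ D_F(𝓛 ‖ 𝓛̂ t) = log(det (𝓛̂ t) / det 𝓛) + tr((𝓛̂ t)⁻¹ 𝓛) − n`
is differentiable with derivative `tr((𝓛̂ t)⁻¹ ⬝ 𝓛̂' t ⬝ (𝓛̂ t)⁻¹ ⬝ (𝓛̂ t − 𝓛))`. -/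
theorem bregman_logdet_hasDerivAt
    (n : ℕ) (hn : 1 ≤ n)
    (L : Matrix (Fin n) (Fin n) ℝ) (hL : L.PosDef)
    (Lhat Lhat' : ℝ → Matrix (Fin n) (Fin n) ℝ)
    (hderiv : ∀ t, ∀ i j, HasDerivAt (fun s => Lhat s i j) (Lhat' t i j) t)
    (hpd : ∀ t, (Lhat t).PosDef) :
    ∀ t, HasDerivAt
      (fun s => Real.log ((Lhat s).det / L.det) + ((Lhat s)⁻¹ * L).trace - (n : ℝ))
      (((Lhat t)⁻¹ * Lhat' t * (Lhat t)⁻¹ * (Lhat t - L)).trace) t := by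
  intro t
  simpa [logDetBregmanDiv] using bregman_logdet_hasDerivAt_general L
    (hasDerivAt_matrix.mpr (hderiv t)) (div_pos (hpd t).det_pos hL.det_pos)
end

section
/- Let β₁ > 0, β₂ > 0, L_q > 0, L_d > 0, K_f > 0, K_v > 0, K_i > 0, K₁ > 0, K₂ > 0 be constants satisfying the gain conditions β₁ K_f / L_q ≥ β₂ K_i / (2 L_d), K₂ ≥ K₁ β₂ / 2, and K₁ = L_q / (β₁ K_v). Let e_F, e_i, e_v : ℝ → ℝ be differentiable functions satisfying e_F' = (β₁/L_q)(−K_f e_F − K_v e_v) + (β₂ K_i / L_d) e_i and e_i' = −(K_i / L_d) e_i. Then the accompanying function ν(t) = (K₁/2) e_F(t)² + (K₂/2) e_i(t)² satisfies, for all t, ν'(t) ≤ −K₁ ( β₁ K_f / L_q − β₂ K_i / (2 L_d) ) e_F(t)² − (K_i / L_d) ( K₂ − K₁ β₂ / 2 ) e_i(t)² − e_F(t) e_v(t). -/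
/-!
The choice of `K₁` makes the velocity term of `K₁ e_F e_F'` exactly `-e_F e_v`. The only other
indefinite term of `ν'` is the coupling `(K₁ β₂ K_i / L_d) e_F e_i`, and
`2 e_F e_i = e_F² + e_i² - (e_F - e_i)²` turns the claim into an equality up to the dropped
square `K₁ (β₂ K_i / (2 L_d)) (e_F - e_i)²`.
-/

section Field

variable {𝕜 : Type*}

theorem hasDerivAt_div_two_mul_sq [NontriviallyNormedField 𝕜] [NeZero (2 : 𝕜)]
    {f : 𝕜 → 𝕜} {f' t : 𝕜} (hf : HasDerivAt f f' t) (c : 𝕜) :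
    HasDerivAt (fun s ↦ c / 2 * f s ^ 2) (c * f t * f') t := by
  refine ((hf.fun_pow 2).const_mul (c / 2)).congr_deriv ?_
  calc c / 2 * ((2 : ℕ) * f t ^ (2 - 1) * f') = c / 2 * 2 * f t * f' := by push_cast; ring
    _ = c * f t * f' := by rw [div_mul_cancel₀ c two_ne_zero]

theorem power_balance_eq_sub_sq [Field 𝕜] [NeZero (2 : 𝕜)]
    {β₁ L_q K_v K₁ : 𝕜} (hK₁ : K₁ * (β₁ / L_q) * K_v = 1) (β₂ L_d K_f K_i K₂ x y v : 𝕜) :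
    K₁ * x * (β₁ / L_q * (-(K_f * x) - K_v * v) + β₂ * K_i / L_d * y) +
        K₂ * y * (-(K_i / L_d) * y) =
      -K₁ * (β₁ * K_f / L_q - β₂ * K_i / (2 * L_d)) * x ^ 2 -
        K_i / L_d * (K₂ - K₁ * β₂ / 2) * y ^ 2 - x * v -
        K₁ * (β₂ * K_i / (2 * L_d)) * (x - y) ^ 2 := by
  have coupling : β₂ * K_i / L_d = 2 * (β₂ * K_i / (2 * L_d)) := by
    rw [← mul_div_assoc, mul_div_mul_left _ _ two_ne_zero]
  linear_combination K₁ * x * y * coupling - x * v * hK₁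

end Field

/-- The accompanying function `ν` of the actuator subsystem: the quadratic storage function of the
force error `e_F` and the `d`-axis current error `e_i`, with weights `K₁` and `K₂`. -/
noncomputable def accompanyingFunction (K₁ K₂ : ℝ) (e_F e_i : ℝ → ℝ) (t : ℝ) : ℝ :=
  K₁ / 2 * e_F t ^ 2 + K₂ / 2 * e_i t ^ 2

theorem hasDerivAt_accompanyingFunction (K₁ K₂ : ℝ) {e_F e_i : ℝ → ℝ} {e_F' e_i' t : ℝ}
    (hF : HasDerivAt e_F e_F' t) (hi : HasDerivAt e_i e_i' t) :
    HasDerivAt (accompanyingFunction K₁ K₂ e_F e_i)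
      (K₁ * e_F t * e_F' + K₂ * e_i t * e_i') t :=
  (hasDerivAt_div_two_mul_sq hF K₁).fun_add (hasDerivAt_div_two_mul_sq hi K₂)

theorem actuator_virtual_stability_general
    {β₁ β₂ L_q L_d K_f K_v K_i K₁ K₂ : ℝ}
    (hβ₁ : 0 < β₁) (hβ₂ : 0 ≤ β₂) (hLq : 0 < L_q) (hLd : 0 < L_d) (hKv : 0 < K_v) (hKi : 0 ≤ K_i)
    (hK₁ : K₁ = L_q / (β₁ * K_v)) {e_F e_i e_v : ℝ → ℝ} {t : ℝ}
    (hF : HasDerivAt e_F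
      (β₁ / L_q * (-(K_f * e_F t) - K_v * e_v t) + β₂ * K_i / L_d * e_i t) t)
    (hi : HasDerivAt e_i (-(K_i / L_d) * e_i t) t) :
    deriv (accompanyingFunction K₁ K₂ e_F e_i) t ≤
      -K₁ * (β₁ * K_f / L_q - β₂ * K_i / (2 * L_d)) * e_F t ^ 2 -
        K_i / L_d * (K₂ - K₁ * β₂ / 2) * e_i t ^ 2 - e_F t * e_v t := by
  have normalized : K₁ * (β₁ / L_q) * K_v = 1 := by rw [hK₁]; field_simp
  have K₁_pos : 0 < K₁ := by rw [hK₁]; positivity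
  rw [(hasDerivAt_accompanyingFunction K₁ K₂ hF hi).deriv, power_balance_eq_sub_sq normalized]
  exact sub_le_self _ (by positivity)

/-- Under the gain conditions `β₁ K_f / L_q ≥ β₂ K_i / (2 L_d)`,
`K₂ ≥ K₁ β₂ / 2`, `K₁ = L_q / (β₁ K_v)`, and the closed-loop error dynamics
`e_F' = (β₁/L_q)(−K_f e_F − K_v e_v) + (β₂ K_i/L_d) e_i`, `e_i' = −(K_i/L_d) e_i`,
the accompanying function `ν = (K₁/2) e_F² + (K₂/2) e_i²` satisfies
`ν' ≤ −K₁(β₁ K_f/L_q − β₂ K_i/(2 L_d)) e_F² − (K_i/L_d)(K₂ − K₁ β₂/2) e_i² − e_F e_v`. -/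
theorem actuator_virtual_stability
    (β₁ β₂ L_q L_d K_f K_v K_i K₁ K₂ : ℝ)
    (hβ₁ : 0 < β₁) (hβ₂ : 0 < β₂) (hLq : 0 < L_q) (hLd : 0 < L_d)
    (hKf : 0 < K_f) (hKv : 0 < K_v) (hKi : 0 < K_i) (hK₁ : 0 < K₁) (hK₂ : 0 < K₂)
    (hgain₁ : β₁ * K_f / L_q ≥ β₂ * K_i / (2 * L_d))
    (hgain₂ : K₂ ≥ K₁ * β₂ / 2)
    (hgain₃ : K₁ = L_q / (β₁ * K_v))
    (e_F e_i e_v : ℝ → ℝ)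
    (hF : Differentiable ℝ e_F) (hi : Differentiable ℝ e_i) (hv : Differentiable ℝ e_v)
    (hdF : ∀ t, deriv e_F t =
      (β₁ / L_q) * (-(K_f * e_F t) - K_v * e_v t) + (β₂ * K_i / L_d) * e_i t)
    (hdi : ∀ t, deriv e_i t = -(K_i / L_d) * e_i t) :
    ∀ t, deriv (fun s => K₁ / 2 * e_F s ^ 2 + K₂ / 2 * e_i s ^ 2) t ≤
      -K₁ * (β₁ * K_f / L_q - β₂ * K_i / (2 * L_d)) * e_F t ^ 2 -
        (K_i / L_d) * (K₂ - K₁ * β₂ / 2) * e_i t ^ 2 - e_F t * e_v t :=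
  fun t ↦ actuator_virtual_stability_general hβ₁ hβ₂.le hLq hLd hKv hKi.le hgain₃
    (hdF t ▸ (hF t).hasDerivAt) (hdi t ▸ (hi t).hasDerivAt)
end
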